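/- arXiv:2502.08731 — 2 statements merged into one kernel-verified Lean document; each statement's English description precedes it below -/
import Mathlib

section
/- Suppose γ₀ < 0 < 1 < γ₁ with γ₀ ≠ γ₁, let ν₀, ν₁, D, K be real numbers, let Y₀ ≠ 0 and X₁ ≠ 0 be real coefficients, and let Q̄ > 0 and Q̲ > 0 be the upper and lower demand thresholds. Assume the value-matching and smooth-pasting system holds: Y₀·Q̄^γ₁ = X₁·Q̄^γ₀ + ν₀·Q̄ + ν₁ − D, Y₀·Q̲^γ₁ = X₁·Q̲^γ₀ + ν₀·Q̲ + ν₁ + K, γ₁·Y₀·Q̄^(γ₁−1) = γ₀·X₁·Q̄^(γ₀−1) + ν₀, and γ₁·Y₀·Q̲^(γ₁−1) = γ₀·X₁·Q̲^(γ₀−1) + ν₀. Then the thresholds satisfy the two ratio equations (Q̄/Q̲)^γ₁ = (ν₀(1−γ₀)Q̄ − γ₀(ν₁−D)) / (ν₀(1−γ₀)Q̲ − γ₀(ν₁+K)) and (Q̄/Q̲)^γ₀ = (ν₀(1−γ₁)Q̄ − γ₁(ν₁−D)) / (ν₀(1−γ₁)Q̲ − γ₁(ν₁+K)). -/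
theorem threshold_aux (g h n c Y X Q : ℝ) (hQ : 0 < Q)
    (hV : Y * Q ^ h = X * Q ^ g + n * Q + c)
    (hS : h * Y * Q ^ (h - 1) = g * X * Q ^ (g - 1) + n) :
    n * (1 - g) * Q - g * c = (h - g) * Y * Q ^ h ∧
    n * (1 - h) * Q - h * c = (h - g) * X * Q ^ g := by
  rw [Real.rpow_sub_one hQ.ne', Real.rpow_sub_one hQ.ne'] at hS
  have hS2 : h * Y * Q ^ h = g * X * Q ^ g + n * Q := by
    field_simp at hS
    linarith
  constructor
  · linear_combination g * hV - hS2
  · linear_combination h * hV - hS2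

/-- Proposition 1 (Appendix A): with positive switching costs, the value-matching and
smooth-pasting system at the upper threshold `Qu` and lower threshold `Ql` implies the
two ratio equations characterizing the thresholds. -/
theorem fare_free_switching_thresholds
    (γ₀ γ₁ ν₀ ν₁ D K Y₀ X₁ Qu Ql : ℝ)
    (hγ₀ : γ₀ < 0) (hγ₁ : 1 < γ₁) (hγ : γ₀ ≠ γ₁)
    (hY₀ : Y₀ ≠ 0) (hX₁ : X₁ ≠ 0)
    (hQu : 0 < Qu) (hQl : 0 < Ql)
    (hVM_up : Y₀ * Qu ^ γ₁ = X₁ * Qu ^ γ₀ + ν₀ * Qu + ν₁ - D)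
    (hVM_lo : Y₀ * Ql ^ γ₁ = X₁ * Ql ^ γ₀ + ν₀ * Ql + ν₁ + K)
    (hSP_up : γ₁ * Y₀ * Qu ^ (γ₁ - 1) = γ₀ * X₁ * Qu ^ (γ₀ - 1) + ν₀)
    (hSP_lo : γ₁ * Y₀ * Ql ^ (γ₁ - 1) = γ₀ * X₁ * Ql ^ (γ₀ - 1) + ν₀) :
    (Qu / Ql) ^ γ₁ =
      (ν₀ * (1 - γ₀) * Qu - γ₀ * (ν₁ - D)) / (ν₀ * (1 - γ₀) * Ql - γ₀ * (ν₁ + K)) ∧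
    (Qu / Ql) ^ γ₀ =
      (ν₀ * (1 - γ₁) * Qu - γ₁ * (ν₁ - D)) / (ν₀ * (1 - γ₁) * Ql - γ₁ * (ν₁ + K)) := by
  obtain ⟨a1, a2⟩ := threshold_aux γ₀ γ₁ ν₀ (ν₁ - D) Y₀ X₁ Qu hQu (by linarith) hSP_up
  obtain ⟨b1, b2⟩ := threshold_aux γ₀ γ₁ ν₀ (ν₁ + K) Y₀ X₁ Ql hQl (by linarith) hSP_lo
  have hd : γ₁ - γ₀ ≠ 0 := sub_ne_zero.mpr hγ.symm
  rw [a1, a2, b1, b2, Real.div_rpow hQu.le hQl.le, Real.div_rpow hQu.le hQl.le,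
    mul_div_mul_left _ _ (mul_ne_zero hd hY₀), mul_div_mul_left _ _ (mul_ne_zero hd hX₁)]
  exact ⟨rfl, rfl⟩
end

section
/- Suppose γ₀ < 0 and γ₁ > 1, let ν₀ ≠ 0 and ν₁ be real numbers, let Y₀, X₁ be real coefficients, and let Q* > 0. Assume the value-matching, smooth-pasting, and second-order matching conditions hold at Q*: Y₀·Q*^γ₁ = X₁·Q*^γ₀ + ν₀·Q* + ν₁, γ₁·Y₀·Q*^(γ₁−1) = γ₀·X₁·Q*^(γ₀−1) + ν₀, and γ₁(γ₁−1)·Y₀·Q*^(γ₁−2) = γ₀(γ₀−1)·X₁·Q*^(γ₀−2). Then the single switching threshold satisfies Q* = γ₀γ₁ν₁ / ((1−γ₀)(γ₁−1)ν₀). -/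
/-- Proposition 2 (Appendix B): with zero switching costs, value matching, smooth pasting,
and second-order matching at a single threshold `Qs` determine
`Qs = γ₀γ₁ν₁ / ((1−γ₀)(γ₁−1)ν₀)`. -/
theorem fare_free_single_threshold
    (γ₀ γ₁ ν₀ ν₁ Y₀ X₁ Qs : ℝ)
    (hγ₀ : γ₀ < 0) (hγ₁ : 1 < γ₁) (hν₀ : ν₀ ≠ 0) (hQs : 0 < Qs)
    (hVM : Y₀ * Qs ^ γ₁ = X₁ * Qs ^ γ₀ + ν₀ * Qs + ν₁)
    (hSP : γ₁ * Y₀ * Qs ^ (γ₁ - 1) = γ₀ * X₁ * Qs ^ (γ₀ - 1) + ν₀)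
    (hSO : γ₁ * (γ₁ - 1) * Y₀ * Qs ^ (γ₁ - 2) = γ₀ * (γ₀ - 1) * X₁ * Qs ^ (γ₀ - 2)) :
    Qs = γ₀ * γ₁ * ν₁ / ((1 - γ₀) * (γ₁ - 1) * ν₀) := by
  have hne : Qs ≠ 0 := hQs.ne'
  have hd : (1 - γ₀) * (γ₁ - 1) * ν₀ ≠ 0 :=
    mul_ne_zero (mul_ne_zero (by linarith) (by linarith)) hν₀
  have p1 : ∀ g : ℝ, Qs ^ (g - 1) * Qs = Qs ^ g := fun g => by
    rw [Real.rpow_sub_one hne]; field_simp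
  have p2 : ∀ g : ℝ, Qs ^ (g - 2) * Qs ^ 2 = Qs ^ g := fun g => by
    have h : g - 2 = g - 1 - 1 := by ring
    rw [h, pow_two, ← mul_assoc, p1, p1]
  have hSP2 : γ₁ * (Y₀ * Qs ^ γ₁) = γ₀ * (X₁ * Qs ^ γ₀) + ν₀ * Qs := by
    rw [← p1 γ₁, ← p1 γ₀]; linear_combination Qs * hSP
  have hSO2 : γ₁ * (γ₁ - 1) * (Y₀ * Qs ^ γ₁) = γ₀ * (γ₀ - 1) * (X₁ * Qs ^ γ₀) := by
    rw [← p2 γ₁, ← p2 γ₀]; linear_combination Qs ^ 2 * hSO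
  generalize Y₀ * Qs ^ γ₁ = A at *
  generalize X₁ * Qs ^ γ₀ = B at *
  have e1 : γ₁ * A * (γ₁ - γ₀) = (1 - γ₀) * (ν₀ * Qs) := by
    linear_combination hSO2 - (γ₀ - 1) * hSP2
  have e2 : γ₀ * B * (γ₁ - γ₀) = -((γ₁ - 1) * (ν₀ * Qs)) := by
    linear_combination hSO2 - (γ₁ - 1) * hSP2
  rw [eq_div_iff hd]
  have hg : γ₁ - γ₀ ≠ 0 := by linarith
  apply mul_left_cancel₀ hg
  linear_combination (-γ₀) * e1 + γ₁ * e2 + γ₀ * γ₁ * (γ₁ - γ₀) * hVM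
end
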